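/- Let 𝒟 = (D_0,…,D_m) be a D-flag of length m with gaps g_1 < … < g_m, and let 𝓜_top be a standard module with D_{𝓜_top} = D_m. Then there exists a flag of standard modules 𝓜_0 ⊆ 𝓜_1 ⊆ … ⊆ 𝓜_m = 𝓜_top with D_{𝓜_i} = D_i for all i if and only if dim_ℂ(𝓜̄^{(g_i)}/𝓜̄^{(g_i+1)}) = 1 for every 1 ≤ i ≤ m, where 𝓜̄ = 𝓜_top/𝔪𝓜_top and 𝓜̄^{(j)} is the image of 𝓜_top ∩ z^j𝒪 in 𝓜̄. -/

import Mathlib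

open PowerSeries

noncomputable section

/-- `𝒪 = ℂ⟦z⟧`, the ring of formal power series over `ℂ`. -/
abbrev 𝒪 : Type := PowerSeries ℂ

/-- `ν(f)`: the order of a power series (least `n` with nonzero coefficient);
only meaningful for `f ≠ 0`. -/
noncomputable def ord (f : 𝒪) : ℕ := sInf {n : ℕ | PowerSeries.coeff n f ≠ 0}

/-- The value semigroup `Γ = {ν(x) : 0 ≠ x ∈ ℛ}` of a subalgebra `ℛ ⊆ 𝒪`. -/
def SGamma (R : Subalgebra ℂ 𝒪) : Set ℕ := {n | ∃ x ∈ R, x ≠ (0:𝒪) ∧ ord x = n}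

/-- The set of gaps `G = ℕ ∖ Γ`. -/
def Gaps (R : Subalgebra ℂ 𝒪) : Set ℕ := (SGamma R)ᶜ

/-- `Δ` is a `Γ`-module: `Γ + Δ ⊆ Δ`. -/
def IsGammaModule (Γ Δ : Set ℕ) : Prop := ∀ a ∈ Γ, ∀ d ∈ Δ, a + d ∈ Δ

/-- `Δ_𝓜 = {ν(x) : 0 ≠ x ∈ 𝓜}` for an `ℛ`-submodule `𝓜 ⊆ 𝒪`. -/
def DeltaM (R : Subalgebra ℂ 𝒪) (M : Submodule ↥R 𝒪) : Set ℕ :=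
  {n | ∃ x ∈ M, x ≠ (0:𝒪) ∧ ord x = n}

/-- `D_𝓜 = Δ_𝓜 ∩ G`, the set of added gaps. -/
def Dset (R : Subalgebra ℂ 𝒪) (M : Submodule ↥R 𝒪) : Set ℕ := DeltaM R M ∩ Gaps R

/-- A standard module: a finitely generated `ℛ`-submodule of `𝒪` containing an
element of order `0`. -/
def IsStd (R : Subalgebra ℂ 𝒪) (M : Submodule ↥R 𝒪) : Prop :=
  M.FG ∧ ∃ x ∈ M, x ≠ (0:𝒪) ∧ ord x = 0

/-- `c ≥ 1` is the conductor of `ℛ`: the minimal exponent with `z^c𝒪 ⊆ ℛ`. -/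
def HasConductor (R : Subalgebra ℂ 𝒪) (c : ℕ) : Prop :=
  1 ≤ c ∧ (∀ f : 𝒪, (PowerSeries.X : 𝒪)^c * f ∈ R) ∧
    ∀ c' : ℕ, (∀ f : 𝒪, (PowerSeries.X : 𝒪)^c' * f ∈ R) → c ≤ c'

/-- `z^j𝒪` as a `ℂ`-submodule of `𝒪`. -/
def zO (j : ℕ) : Submodule ℂ 𝒪 :=
  LinearMap.range (LinearMap.mulLeft ℂ ((PowerSeries.X : 𝒪)^j))

/-- `𝔪𝓜` as a `ℂ`-submodule of `𝒪`, where `𝔪 = {x ∈ ℛ : x = 0 or ν(x) > 0}`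
is the maximal ideal of `ℛ`. -/
def mSmul (R : Subalgebra ℂ 𝒪) (M : Submodule ↥R 𝒪) : Submodule ℂ 𝒪 :=
  Submodule.span ℂ {z : 𝒪 | ∃ r ∈ (R : Set 𝒪), ∃ y ∈ M, (r = 0 ∨ 0 < ord r) ∧ z = r * y}

/-- `dim_ℂ (A / B)` for `ℂ`-subspaces; intended for `B ≤ A`. -/
noncomputable def quotDim (A B : Submodule ℂ 𝒪) : ℕ :=
  Module.finrank ℂ (↥A ⧸ Submodule.comap A.subtype B)

/-- `D_i = D_0 ∪ {g_1, …, g_i}` (the gaps `g` are indexed by `1, …, m`). -/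
def DFlagSet (D0 : Set ℕ) (g : ℕ → ℕ) (i : ℕ) : Set ℕ := D0 ∪ g '' Set.Icc 1 i

/-- `(D_0, …, D_m)` with `D_i = D_0 ∪ {g_1 < … < g_i}` is a `D`-flag:
all `Δ_i = Γ ∪ D_i` are `Γ`-modules. -/
def IsDFlag (R : Subalgebra ℂ 𝒪) (m : ℕ) (D0 : Set ℕ) (g : ℕ → ℕ) : Prop :=
  D0 ⊆ Gaps R ∧ StrictMonoOn g (Set.Icc 1 m) ∧
  (∀ i, 1 ≤ i → i ≤ m → g i ∈ Gaps R \ D0) ∧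
  (∀ i ≤ m, IsGammaModule (SGamma R) (SGamma R ∪ DFlagSet D0 g i))

/-- A `D`-flag is admissible if it is realized by a flag of standard modules. -/
def IsAdmissibleFlag (R : Subalgebra ℂ 𝒪) (m : ℕ) (D0 : Set ℕ) (g : ℕ → ℕ) : Prop :=
  ∃ MM : ℕ → Submodule ↥R 𝒪, (∀ i, i < m → MM i ≤ MM (i+1)) ∧
    ∀ i ≤ m, IsStd R (MM i) ∧ Dset R (MM i) = DFlagSet D0 g i

/-- The subalgebra `ℂ[z^a, z^b + z^c] + z^N ℂ⟦z⟧` of `𝒪`. -/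
def Rring (a b c N : ℕ) : Subalgebra ℂ 𝒪 where
  carrier := {f : 𝒪 | ∃ p ∈ Algebra.adjoin ℂ
      ({(PowerSeries.X : 𝒪)^a, (PowerSeries.X : 𝒪)^b + (PowerSeries.X : 𝒪)^c} : Set 𝒪),
    ∃ g : 𝒪, f = p + (PowerSeries.X : 𝒪)^N * g}
  mul_mem' := by
    rintro x y ⟨p, hp, gx, rfl⟩ ⟨q, hq, gy, rfl⟩
    exact ⟨p * q, mul_mem hp hq,
      p * gy + gx * q + (PowerSeries.X : 𝒪)^N * (gx * gy), by ring⟩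
  one_mem' := ⟨1, one_mem _, 0, by ring⟩
  add_mem' := by
    rintro x y ⟨p, hp, gx, rfl⟩ ⟨q, hq, gy, rfl⟩
    exact ⟨p + q, add_mem hp hq, gx + gy, by ring⟩
  zero_mem' := ⟨0, zero_mem _, 0, by ring⟩
  algebraMap_mem' := fun r => ⟨algebraMap ℂ 𝒪 r, Subalgebra.algebraMap_mem _ r, 0, by ring⟩

/-- The ring `ℂ⟦z^4, z^{2u}+z^v⟧ = ℂ[z^4, z^{2u}+z^v] + z^{4u+v}ℂ⟦z⟧` for the
plane curve singularity with Puiseux exponents `(4, 2u, v)`. -/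
def Rcal (u v : ℕ) : Subalgebra ℂ 𝒪 := Rring 4 (2*u) v (4*u+v)

/-- The gap counting function `γ_Δ(ℓ) = |[ℓ,∞) ∖ Δ|`. -/
noncomputable def gapCount (Δ : Set ℕ) (ℓ : ℕ) : ℕ := Set.ncard {k : ℕ | ℓ ≤ k ∧ k ∉ Δ}

/-- `n = n(D)`: the smallest odd number in `(Δ ∪ {v}) ∩ [2u, ∞)`. -/
noncomputable def nOdd (u v : ℕ) (Δ : Set ℕ) : ℕ :=
  sInf {k : ℕ | Odd k ∧ 2*u ≤ k ∧ (k ∈ Δ ∨ k = v)}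

/-- The dimension change `μ_{D,g}` of Theorem `dimprop` (for the family `(4,2u,v)`),
where `Γ` is the value semigroup. -/
noncomputable def muDim (u v : ℕ) (Γ : Set ℕ) (D : Set ℕ) (gp : ℕ) : ℕ :=
  let Δ : Set ℕ := Γ ∪ D
  let Δ' : Set ℕ := Δ ∪ {gp}
  let n : ℕ := nOdd u v Δ
  if gp % 4 = 2 then
    (gapCount Δ' gp - gapCount Δ' (gp+4)) - (gapCount Δ' (gp+n) - gapCount Δ' (gp+4+n))
  else gapCount Δ' gp - gapCount Δ' (gp+4)


/-- `x` has order exactly `n`, spelled out through coefficients. -/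
def HasOrd (n : ℕ) (x : 𝒪) : Prop :=
  (∀ k < n, PowerSeries.coeff k x = 0) ∧ PowerSeries.coeff n x ≠ 0

lemma hasOrd_iff (n : ℕ) (x : 𝒪) : (x ≠ 0 ∧ ord x = n) ↔ HasOrd n x := by
  constructor
  · rintro ⟨hx, rfl⟩
    have hne : {n : ℕ | PowerSeries.coeff n x ≠ 0}.Nonempty := by
      by_contra h
      rw [Set.not_nonempty_iff_eq_empty] at h
      apply hx
      ext n
      by_contra h2
      have : n ∈ {n : ℕ | PowerSeries.coeff n x ≠ 0} := by simpa using h2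
      rw [h] at this
      exact this
    refine ⟨fun k hk => ?_, Nat.sInf_mem hne⟩
    by_contra h2
    exact Nat.notMem_of_lt_sInf hk h2
  · rintro ⟨h1, h2⟩
    refine ⟨?_, ?_⟩
    · rintro rfl
      simp at h2
    · apply le_antisymm
      · exact Nat.sInf_le h2
      · apply le_csInf ⟨n, h2⟩
        intro b hb
        by_contra hlt
        exact hb (h1 b (not_le.mp hlt))

lemma mem_DeltaM {R : Subalgebra ℂ 𝒪} {M : Submodule ↥R 𝒪} {n : ℕ} :
    n ∈ DeltaM R M ↔ ∃ x ∈ M, HasOrd n x := by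
  simp only [DeltaM, Set.mem_ofPred_eq, hasOrd_iff]

lemma mem_SGamma {R : Subalgebra ℂ 𝒪} {n : ℕ} :
    n ∈ SGamma R ↔ ∃ x ∈ R, HasOrd n x := by
  simp only [SGamma, Set.mem_ofPred_eq, hasOrd_iff]

lemma mem_zO {j : ℕ} {x : 𝒪} : x ∈ zO j ↔ ∀ k < j, PowerSeries.coeff k x = 0 := by
  rw [← PowerSeries.X_pow_dvd_iff]
  simp only [zO, LinearMap.mem_range, LinearMap.mulLeft_apply]
  exact ⟨fun ⟨y, h⟩ => ⟨y, h.symm⟩, fun ⟨y, h⟩ => ⟨y, h.symm⟩⟩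

lemma coeff_csub (k : ℕ) (a : ℂ) (x y : 𝒪) :
    PowerSeries.coeff k (x - a • y) = PowerSeries.coeff k x - a * PowerSeries.coeff k y := by
  simp

lemma zero_mem_SGamma (R : Subalgebra ℂ 𝒪) : 0 ∈ SGamma R :=
  mem_SGamma.2 ⟨1, one_mem _, by simp [HasOrd]⟩

lemma smulC_mem {R : Subalgebra ℂ 𝒪} {M : Submodule ↥R 𝒪} (a : ℂ) {x : 𝒪} (hx : x ∈ M) :
    a • x ∈ M := by
  have := M.smul_mem (algebraMap ℂ R a) hx
  rwa [algebraMap_smul] at this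

lemma mulR_mem {R : Subalgebra ℂ 𝒪} {M : Submodule ↥R 𝒪} {r x : 𝒪} (hr : r ∈ R) (hx : x ∈ M) :
    r * x ∈ M := M.smul_mem (⟨r, hr⟩ : R) hx

lemma hasOrd_mul {a b : ℕ} {x y : 𝒪} (hx : HasOrd a x) (hy : HasOrd b y) :
    HasOrd (a + b) (x * y) := by
  obtain ⟨x', rfl⟩ := PowerSeries.X_pow_dvd_iff.2 hx.1
  obtain ⟨y', rfl⟩ := PowerSeries.X_pow_dvd_iff.2 hy.1
  have e : (PowerSeries.X : 𝒪) ^ a * x' * (PowerSeries.X ^ b * y')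
      = PowerSeries.X ^ (a + b) * (x' * y') := by ring
  refine ⟨?_, ?_⟩
  · rw [← PowerSeries.X_pow_dvd_iff, e]
    exact dvd_mul_right _ _
  · have h1 := hx.2
    have h2 := hy.2
    rw [e]
    simp only [PowerSeries.coeff_X_pow_mul', le_refl, if_true, Nat.sub_self,
      PowerSeries.coeff_zero_eq_constantCoeff, map_mul] at h1 h2 ⊢
    exact mul_ne_zero h1 h2

lemma gamma_sub {R : Subalgebra ℂ 𝒪} {M : Submodule ↥R 𝒪} (h0 : 0 ∈ DeltaM R M) :
    SGamma R ⊆ DeltaM R M := by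
  intro n hn
  obtain ⟨r, hr, hro⟩ := mem_SGamma.1 hn
  obtain ⟨x, hx, hxo⟩ := mem_DeltaM.1 h0
  exact mem_DeltaM.2 ⟨r * x, mulR_mem hr hx, hasOrd_mul hro hxo⟩

/-- Successive elimination of leading terms. -/
lemma elim_lemma {R : Subalgebra ℂ 𝒪} {N M : Submodule ↥R 𝒪} (hNM : N ≤ M) (n : ℕ)
    (h : ∀ k < n, k ∈ DeltaM R M → k ∈ DeltaM R N) :
    ∀ x ∈ M, ∃ x' ∈ N, ∀ k < n, PowerSeries.coeff k (x - x') = 0 := by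
  induction n with
  | zero => exact fun x _ => ⟨0, N.zero_mem, by simp⟩
  | succ n ih =>
    intro x hx
    obtain ⟨x', hx', hk⟩ := ih (fun k hk => h k (by omega)) x hx
    by_cases hc : PowerSeries.coeff n (x - x') = 0
    · refine ⟨x', hx', fun k hkn => ?_⟩
      rcases Nat.lt_succ_iff_lt_or_eq.1 hkn with h1 | rfl
      · exact hk k h1
      · exact hc
    · obtain ⟨y, hy, hyo⟩ := mem_DeltaM.1
        (h n (by omega) (mem_DeltaM.2 ⟨x - x', M.sub_mem hx (hNM hx'), hk, hc⟩))
      refine ⟨x' + (PowerSeries.coeff n (x - x') / PowerSeries.coeff n y) • y,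
        N.add_mem hx' (smulC_mem _ hy), fun k hkn => ?_⟩
      rw [← sub_sub, coeff_csub]
      rcases Nat.lt_succ_iff_lt_or_eq.1 hkn with h1 | rfl
      · rw [hk k h1, hyo.1 k h1]; simp
      · rw [div_mul_cancel₀ _ hyo.2, sub_self]

lemma fg_of_ord_zero {R : Subalgebra ℂ 𝒪} {c : ℕ}
    (hc : ∀ f : 𝒪, (PowerSeries.X : 𝒪) ^ c * f ∈ R) {N : Submodule ↥R 𝒪}
    (h0 : 0 ∈ DeltaM R N) : N.FG := by
  obtain ⟨u, hu, huo⟩ := mem_DeltaM.1 h0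
  have hunit : IsUnit u := by
    rw [PowerSeries.isUnit_iff_constantCoeff]
    have := huo.2
    rw [PowerSeries.coeff_zero_eq_constantCoeff] at this
    exact isUnit_iff_ne_zero.2 this
  have hch : ∀ n : ℕ, ∃ e ∈ N, n ∈ DeltaM R N → HasOrd n e := by
    intro n
    by_cases hn : n ∈ DeltaM R N
    · obtain ⟨e, he, heo⟩ := mem_DeltaM.1 hn
      exact ⟨e, he, fun _ => heo⟩
    · exact ⟨0, N.zero_mem, fun h => absurd h hn⟩
  choose e he heo using hch
  set S : Set 𝒪 := insert u (e '' Set.Iio c) with hS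
  have hSfin : S.Finite := ((Set.finite_Iio c).image e).insert u
  have hle : Submodule.span R S ≤ N := by
    rw [Submodule.span_le]
    rintro x (rfl | ⟨n, -, rfl⟩)
    · exact hu
    · exact he n
  have huS : u ∈ Submodule.span R S := Submodule.subset_span (Set.mem_insert _ _)
  refine Submodule.fg_def.2 ⟨S, hSfin, le_antisymm hle fun x hx => ?_⟩
  obtain ⟨x', hx', hk⟩ := elim_lemma hle c (fun k hkc hkN =>
    mem_DeltaM.2 ⟨e k, Submodule.subset_span (Set.mem_insert_of_mem _ ⟨k, hkc, rfl⟩),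
      heo k hkN⟩) x hx
  obtain ⟨w, hw⟩ := PowerSeries.X_pow_dvd_iff.2 hk
  obtain ⟨v, hv⟩ := hunit.exists_left_inv
  have e1 : x = x' + (PowerSeries.X ^ c * (w * v)) * u := by
    have : (PowerSeries.X : 𝒪) ^ c * (w * v) * u = x - x' := by
      rw [hw, mul_assoc, mul_assoc, hv, mul_one]
    rw [this]; ring
  rw [e1]
  exact Submodule.add_mem _ hx' (mulR_mem (hc _) huS)

lemma mSmul_le {R : Subalgebra ℂ 𝒪} {M : Submodule ↥R 𝒪} : mSmul R M ≤ M.restrictScalars ℂ := by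
  rw [mSmul, Submodule.span_le]
  rintro z ⟨r, hr, y, hy, -, rfl⟩
  exact mulR_mem hr hy

/-- The graded piece has dimension one iff `n` is not an order of `𝔪𝓜`. -/
lemma quotDim_iff {R : Subalgebra ℂ 𝒪} {M : Submodule ↥R 𝒪} {n : ℕ} (hn : n ∈ DeltaM R M) :
    quotDim (((M.restrictScalars ℂ) ⊓ zO n) ⊔ mSmul R M)
      (((M.restrictScalars ℂ) ⊓ zO (n + 1)) ⊔ mSmul R M) = 1 ↔
    ¬ ∃ y ∈ mSmul R M, HasOrd n y := by
  obtain ⟨x, hx, hxo⟩ := mem_DeltaM.1 hn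
  set A := ((M.restrictScalars ℂ) ⊓ zO n) ⊔ mSmul R M with hA
  set B := ((M.restrictScalars ℂ) ⊓ zO (n + 1)) ⊔ mSmul R M with hB
  have hxA : x ∈ A := Submodule.mem_sup_left ⟨hx, mem_zO.2 hxo.1⟩
  have key : ∀ p ∈ M, (∀ k < n, PowerSeries.coeff k p = 0) → ∀ q ∈ M, HasOrd n q →
      ∃ a : ℂ, p - a • q ∈ (M.restrictScalars ℂ) ⊓ zO (n + 1) := by
    intro p hp hpo q hq hqo
    refine ⟨PowerSeries.coeff n p / PowerSeries.coeff n q,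
      M.sub_mem hp (smulC_mem _ hq), mem_zO.2 fun k hk => ?_⟩
    rw [coeff_csub]
    rcases Nat.lt_succ_iff_lt_or_eq.1 hk with h1 | rfl
    · rw [hpo k h1, hqo.1 k h1]; simp
    · rw [div_mul_cancel₀ _ hqo.2, sub_self]
  have hgen : ∀ w ∈ A, ∃ a : ℂ, w - a • x ∈ B := by
    intro w hw
    obtain ⟨p, hp, q, hq, rfl⟩ := Submodule.mem_sup.1 hw
    obtain ⟨a, ha⟩ := key p hp.1 (mem_zO.1 hp.2) x hx hxo
    refine ⟨a, ?_⟩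
    have : p + q - a • x = (p - a • x) + q := by ring
    rw [this]
    exact Submodule.add_mem_sup ha hq
  have hxB : x ∈ B ↔ ∃ y ∈ mSmul R M, HasOrd n y := by
    constructor
    · intro h
      obtain ⟨p, hp, q, hq, rfl⟩ := Submodule.mem_sup.1 h
      have hp2 := mem_zO.1 hp.2
      refine ⟨q, hq, fun k hk => ?_, ?_⟩
      · have := hxo.1 k hk
        rwa [map_add, hp2 k (by omega), zero_add] at this
      · have := hxo.2
        rwa [map_add, hp2 n (by omega), zero_add] at this
    · rintro ⟨y, hy, hyo⟩
      obtain ⟨a, ha⟩ := key x hx hxo.1 y (mSmul_le hy) hyo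
      have : x = (x - a • y) + a • y := by ring
      rw [this]
      exact Submodule.add_mem_sup ha (Submodule.smul_mem _ _ hy)
  rw [← hxB, quotDim]
  constructor
  · intro h1 hxB'
    have hle : Submodule.comap A.subtype B = ⊤ := by
      rw [eq_top_iff]
      rintro ⟨w, hw⟩ -
      obtain ⟨a, ha⟩ := hgen w hw
      have : w = (w - a • x) + a • x := by ring
      change w ∈ B
      rw [this]
      exact B.add_mem ha (B.smul_mem _ hxB')
    have hs : Subsingleton (↥A ⧸ Submodule.comap A.subtype B) :=
      Submodule.Quotient.subsingleton_iff.2 hle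
    rw [Module.finrank_zero_of_subsingleton] at h1
    exact zero_ne_one h1
  · intro hnot
    refine finrank_eq_one (Submodule.Quotient.mk ⟨x, hxA⟩) ?_ ?_
    · rw [Ne, Submodule.Quotient.mk_eq_zero]
      exact hnot
    · intro w
      obtain ⟨⟨w, hw⟩, rfl⟩ := Submodule.Quotient.mk_surjective _ w
      obtain ⟨a, ha⟩ := hgen w hw
      refine ⟨a, ?_⟩
      rw [← Submodule.Quotient.mk_smul, eq_comm, Submodule.Quotient.eq]
      exact ha

/-- Removing one order from an intermediate module. -/
lemma remove_step {R : Subalgebra ℂ 𝒪} {M N : Submodule ↥R 𝒪} {n : ℕ}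
    (hK : mSmul R M ≤ N.restrictScalars ℂ) (hNM : N ≤ M) (hn : n ∈ DeltaM R N)
    (hnot : ¬ ∃ y ∈ mSmul R M, HasOrd n y) :
    ∃ N' : Submodule ↥R 𝒪, N' ≤ N ∧ mSmul R M ≤ N'.restrictScalars ℂ ∧
      DeltaM R N' = DeltaM R N \ {n} := by
  obtain ⟨x, hx, hxo⟩ := mem_DeltaM.1 hn
  have hxB : x ∉ ((N.restrictScalars ℂ) ⊓ zO (n + 1)) ⊔ mSmul R M := by
    intro h
    obtain ⟨p, hp, q, hq, rfl⟩ := Submodule.mem_sup.1 h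
    have hp2 := mem_zO.1 hp.2
    refine hnot ⟨q, hq, fun k hk => ?_, ?_⟩
    · have := hxo.1 k hk
      rwa [map_add, hp2 k (by omega), zero_add] at this
    · have := hxo.2
      rwa [map_add, hp2 n (by omega), zero_add] at this
  obtain ⟨f, hfx, hf⟩ := Submodule.exists_le_ker_of_notMem hxB
  have hfm : ∀ y ∈ mSmul R M, f y = 0 := fun y hy => hf (Submodule.mem_sup_right hy)
  have hfz : ∀ y ∈ N, (∀ k < n + 1, PowerSeries.coeff k y = 0) → f y = 0 :=
    fun y hy hk => hf (Submodule.mem_sup_left ⟨hy, mem_zO.2 hk⟩)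
  refine ⟨{ carrier := {y | y ∈ N ∧ f y = 0}
            add_mem' := ?_
            zero_mem' := ⟨N.zero_mem, map_zero f⟩
            smul_mem' := ?_ }, fun y hy => hy.1, fun y hy => ⟨hK hy, hfm y hy⟩, ?_⟩
  · rintro a b ⟨ha, ha'⟩ ⟨hb, hb'⟩
    exact ⟨N.add_mem ha hb, by rw [map_add, ha', hb', add_zero]⟩
  · rintro r y ⟨hy, hy'⟩
    refine ⟨N.smul_mem r hy, ?_⟩
    set a : ℂ := PowerSeries.coeff 0 (r : 𝒪) with ha
    set s : 𝒪 := (r : 𝒪) - algebraMap ℂ 𝒪 a with hs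
    have hsR : s ∈ R := sub_mem r.2 (R.algebraMap_mem a)
    have hs0 : PowerSeries.coeff 0 s = 0 := by
      rw [hs, ha]; simp
    have e1 : r • y = a • y + s * y := by
      change (r : 𝒪) * y = _
      rw [hs, Algebra.smul_def]; ring
    have hsm : s * y ∈ mSmul R M := by
      refine Submodule.subset_span ⟨s, hsR, y, hNM hy, ?_, rfl⟩
      by_cases h : s = 0
      · exact Or.inl h
      · right
        rw [Nat.pos_iff_ne_zero]
        intro h2
        exact ((hasOrd_iff 0 s).1 ⟨h, h2⟩).2 hs0
    rw [e1, map_add, map_smul, hy', hfm _ hsm]; simp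
  · ext k
    rw [Set.mem_sdiff, Set.mem_singleton_iff, mem_DeltaM, mem_DeltaM]
    constructor
    · rintro ⟨y, ⟨hyN, hfy⟩, hyo⟩
      refine ⟨⟨y, hyN, hyo⟩, ?_⟩
      rintro rfl
      have h1 := hfz (x - (PowerSeries.coeff k x / PowerSeries.coeff k y) • y)
        (N.sub_mem hx (smulC_mem _ hyN)) (fun j hj => by
          rw [coeff_csub]
          rcases Nat.lt_succ_iff_lt_or_eq.1 hj with h1 | rfl
          · rw [hxo.1 j h1, hyo.1 j h1]; simp
          · rw [div_mul_cancel₀ _ hyo.2, sub_self])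
      rw [map_sub, map_smul, hfy, smul_zero, sub_zero] at h1
      exact hfx h1
    · rintro ⟨⟨y, hyN, hyo⟩, hkn⟩
      rcases lt_or_gt_of_ne hkn with hlt | hgt
      · refine ⟨y - (f y / f x) • x, ⟨N.sub_mem hyN (smulC_mem _ hx), ?_⟩, fun j hj => ?_, ?_⟩
        · rw [map_sub, map_smul, smul_eq_mul, div_mul_cancel₀ _ hfx, sub_self]
        · rw [coeff_csub, hyo.1 j hj, hxo.1 j (by omega)]; simp
        · rw [coeff_csub, hxo.1 k hlt, mul_zero, sub_zero]; exact hyo.2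
      · exact ⟨y, ⟨hyN, hfz y hyN fun j hj => hyo.1 j (by omega)⟩, hyo⟩

/-- For `𝓜_top` a standard module with `D_{𝓜_top} = D_m`: a flag of standard
modules `𝓜_0 ⊆ … ⊆ 𝓜_m = 𝓜_top` realizing the `D`-flag exists if and only if
`dim_ℂ(𝓜̄^{(g_i)}/𝓜̄^{(g_i+1)}) = 1` for every `1 ≤ i ≤ m`. -/
theorem statement9 (R : Subalgebra ℂ 𝒪) (c : ℕ) (hR : HasConductor R c)
    (m : ℕ) (D0 : Set ℕ) (g : ℕ → ℕ) (hflag : IsDFlag R m D0 g)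
    (Mtop : Submodule ↥R 𝒪) (hstd : IsStd R Mtop)
    (hDm : Dset R Mtop = DFlagSet D0 g m) :
    (∃ MM : ℕ → Submodule ↥R 𝒪,
      (∀ i, i < m → MM i ≤ MM (i+1)) ∧ MM m = Mtop ∧
      ∀ i ≤ m, IsStd R (MM i) ∧ Dset R (MM i) = DFlagSet D0 g i) ↔
    (∀ i, 1 ≤ i → i ≤ m →
      quotDim (((Mtop.restrictScalars ℂ) ⊓ zO (g i)) ⊔ mSmul R Mtop)
              (((Mtop.restrictScalars ℂ) ⊓ zO (g i + 1)) ⊔ mSmul R Mtop) = 1) := by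
  obtain ⟨hD0, hmono, hg, -⟩ := hflag
  have hgM : ∀ i, 1 ≤ i → i ≤ m → g i ∈ DeltaM R Mtop := by
    intro i h1 h2
    have : g i ∈ Dset R Mtop := by
      rw [hDm]
      exact Or.inr ⟨i, ⟨h1, h2⟩, rfl⟩
    exact this.1
  have hred : (∀ i, 1 ≤ i → i ≤ m →
      quotDim (((Mtop.restrictScalars ℂ) ⊓ zO (g i)) ⊔ mSmul R Mtop)
              (((Mtop.restrictScalars ℂ) ⊓ zO (g i + 1)) ⊔ mSmul R Mtop) = 1) ↔
      ∀ i, 1 ≤ i → i ≤ m → ¬ ∃ y ∈ mSmul R Mtop, HasOrd (g i) y :=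
    forall_congr' fun i => forall_congr' fun h1 => forall_congr' fun h2 =>
      quotDim_iff (hgM i h1 h2)
  rw [hred]
  have hnotin : ∀ i, i < m → g (i + 1) ∉ DFlagSet D0 g i := by
    rintro i hi (h | ⟨j, ⟨hj1, hj2⟩, hj⟩)
    · exact (hg (i + 1) (by omega) (by omega)).2 h
    · have := hmono ⟨hj1, by omega⟩ ⟨by omega, by omega⟩ (show j < i + 1 by omega)
      omega
  constructor
  · rintro ⟨MM, hinc, hMm, hMM⟩ i h1 h2 ⟨y, hy, hyo⟩
    obtain ⟨i, rfl⟩ : ∃ k, i = k + 1 := ⟨i - 1, by omega⟩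
    have hle : MM i ≤ Mtop := by
      have : ∀ k, i + k ≤ m → MM i ≤ MM (i + k) := by
        intro k
        induction k with
        | zero => intro _; exact le_rfl
        | succ k ih => intro hk; exact (ih (by omega)).trans (hinc (i + k) (by omega))
      have h3 := this (m - i) (by omega)
      rwa [show i + (m - i) = m by omega, hMm] at h3
    obtain ⟨⟨-, hord0⟩, hD⟩ := hMM i (by omega)
    have hG : SGamma R ⊆ DeltaM R (MM i) := gamma_sub hord0
    have helim := elim_lemma hle (g (i + 1)) (by
      intro k hk hkM
      by_cases hkG : k ∈ SGamma R
      · exact hG hkG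
      · have hkD : k ∈ Dset R Mtop := ⟨hkM, hkG⟩
        rw [hDm] at hkD
        have : k ∈ Dset R (MM i) := by
          rw [hD]
          rcases hkD with h | ⟨j, ⟨hj1, hj2⟩, rfl⟩
          · exact Or.inl h
          · refine Or.inr ⟨j, ⟨hj1, ?_⟩, rfl⟩
            by_contra hcon
            have := hmono.monotoneOn ⟨h1, h2⟩ ⟨hj1, hj2⟩ (show i + 1 ≤ j by omega)
            omega
        exact this.1)
    have hdec : ∀ y ∈ mSmul R Mtop, ∃ y' ∈ MM i, ∀ k < g (i + 1) + 1,
        PowerSeries.coeff k (y - y') = 0 := by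
      intro y hy
      refine Submodule.span_induction ?_ ?_ ?_ ?_ hy
      · rintro z ⟨r, hr, w, hw, hro, rfl⟩
        obtain ⟨w', hw', hk⟩ := helim w hw
        refine ⟨r * w', mulR_mem hr hw', ?_⟩
        rw [← PowerSeries.X_pow_dvd_iff] at hk ⊢
        rw [← mul_sub, pow_succ']
        refine mul_dvd_mul ?_ hk
        rcases hro with rfl | hro
        · exact dvd_zero _
        · rw [PowerSeries.X_dvd_iff, ← PowerSeries.coeff_zero_eq_constantCoeff_apply]
          by_contra hne
          exact Nat.notMem_of_lt_sInf hro hne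
      · exact ⟨0, Submodule.zero_mem _, by simp⟩
      · rintro a b - - ⟨a', ha', hak⟩ ⟨b', hb', hbk⟩
        refine ⟨a' + b', Submodule.add_mem _ ha' hb', fun k hk => ?_⟩
        rw [add_sub_add_comm, map_add, hak k hk, hbk k hk, add_zero]
      · rintro t a - ⟨a', ha', hak⟩
        refine ⟨t • a', smulC_mem t ha', fun k hk => ?_⟩
        rw [← smul_sub, PowerSeries.coeff_smul, hak k hk]; simp
    obtain ⟨y', hy', hk⟩ := hdec y hy
    have heq : ∀ k < g (i + 1) + 1, PowerSeries.coeff k y' = PowerSeries.coeff k y := by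
      intro k hk'
      have := hk k hk'
      rw [map_sub, sub_eq_zero] at this
      exact this.symm
    have hmem : g (i + 1) ∈ Dset R (MM i) :=
      ⟨mem_DeltaM.2 ⟨y', hy', fun k hk => by rw [heq k (by omega)]; exact hyo.1 k hk,
        by rw [heq _ (by omega)]; exact hyo.2⟩, (hg (i + 1) h1 h2).1⟩
    rw [hD] at hmem
    exact hnotin i (by omega) hmem
  · intro hno
    let P : ℕ → Submodule ↥R 𝒪 → Prop := fun i N =>
      mSmul R Mtop ≤ N.restrictScalars ℂ ∧ N ≤ Mtop ∧ 0 ∈ DeltaM R N ∧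
        Dset R N = DFlagSet D0 g i
    have hstep : ∀ (k : ℕ) (N : Submodule ↥R 𝒪), ∃ N' : Submodule ↥R 𝒪,
        P (m - k) N → N' ≤ N ∧ P (m - (k + 1)) N' := by
      intro k N
      by_cases hP : P (m - k) N
      swap
      · exact ⟨N, fun h => absurd h hP⟩
      by_cases hk : m - k = 0
      · refine ⟨N, fun h => ⟨le_rfl, ?_⟩⟩
        rw [show m - (k + 1) = m - k by omega]
        exact h
      · obtain ⟨i, hi⟩ : ∃ i, m - k = i + 1 := ⟨m - k - 1, by omega⟩
        have hi' : m - (k + 1) = i := by omega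
        rw [hi] at hP
        rw [hi, hi']
        obtain ⟨hK, hN, h0, hD⟩ := hP
        have hmem : g (i + 1) ∈ Dset R N := by
          rw [hD]
          exact Or.inr ⟨i + 1, ⟨by omega, le_rfl⟩, rfl⟩
        obtain ⟨N', hle, hK', hΔ⟩ := remove_step hK hN hmem.1
          (hno (i + 1) (by omega) (by omega))
        refine ⟨N', fun _ => ⟨hle, hK', hle.trans hN, ?_, ?_⟩⟩
        · rw [hΔ]
          refine ⟨h0, fun h => ?_⟩
          rw [Set.mem_singleton_iff] at h
          exact hmem.2 (h ▸ zero_mem_SGamma R)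
        · have e1 : Dset R N' = Dset R N \ {g (i + 1)} := by
            rw [Dset, hΔ, Dset]
            ext n
            simp only [Set.mem_inter_iff, Set.mem_sdiff]
            tauto
          rw [e1, hD]
          ext n
          constructor
          · rintro ⟨h | ⟨j, ⟨hj1, hj2⟩, rfl⟩, hne⟩
            · exact Or.inl h
            · refine Or.inr ⟨j, ⟨hj1, ?_⟩, rfl⟩
              by_contra hcon
              have : j = i + 1 := by omega
              subst this
              exact hne rfl
          · intro h
            refine ⟨?_, ?_⟩
            · rcases h with h | ⟨j, ⟨hj1, hj2⟩, rfl⟩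
              · exact Or.inl h
              · exact Or.inr ⟨j, ⟨hj1, by omega⟩, rfl⟩
            · rintro rfl
              exact hnotin i (by omega) h
    choose st hst using hstep
    let F : ℕ → Submodule ↥R 𝒪 := fun k => Nat.rec Mtop (fun k N => st k N) k
    have hFP : ∀ k, P (m - k) (F k) := by
      intro k
      induction k with
      | zero => exact ⟨mSmul_le, le_rfl, hstd.2, hDm⟩
      | succ k ih => exact (hst k (F k) ih).2
    have hFle : ∀ k, F (k + 1) ≤ F k := fun k => (hst k (F k) (hFP k)).1
    refine ⟨fun i => F (m - i), fun i hi => ?_, ?_, fun i hi => ?_⟩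
    · have := hFle (m - (i + 1))
      rwa [show m - (i + 1) + 1 = m - i by omega] at this
    · change F (m - m) = Mtop
      rw [Nat.sub_self]; rfl
    · obtain ⟨-, -, h0, hD⟩ := hFP (m - i)
      rw [show m - (m - i) = i by omega] at hD
      exact ⟨⟨fg_of_ord_zero hR.2.1 h0, h0⟩, hD⟩

end
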